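/- Assume that for every Q ≻ 0 for which V_Q is a control Lyapunov function of the bilinear system, the SDP feasibility problem {Z PSD, Z ≠ 0, trace(sym(QA)Z) ≥ 0, trace(sym(QB_i)Z) = 0 for all i} is infeasible. Then a quadratic CLF V_Q exists for the bilinear system if and only if there exist constants c_1,...,c_m making A − sum_i c_i B_i Hurwitz. -/

import Mathlib

open Matrix

/-- A real matrix is Hurwitz if all of its (complex) eigenvalues have negative real part. -/
def IsHurwitz {N : ℕ} (M : Matrix (Fin N) (Fin N) ℝ) : Prop :=
  ∀ μ ∈ spectrum ℂ (M.map (Complex.ofReal)), μ.re < 0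

/-!
If the semidefinite program of a CLF matrix `Q` is infeasible, separating the image of the density
matrices under the trace forms from a ray gives `c` with `∑ c i • sym(Q B i) - sym(Q A) ≻ 0`, that
is, `zᵀ Q z` is a Lyapunov function of `A - ∑ c i • B i`.

Conversely, a Hurwitz matrix `M` has a quadratic Lyapunov function: for a small step `τ` the Euler
discretization `C = 1 + τ M` has spectral radius less than one, a truncation of `∑ (Cᴴ)ʲ Cʲ` solves
the discrete-time inequality `P - Cᴴ P C ≻ 0`, and `τ⁻¹ (P - Cᴴ P C)` differs from `-(P M + Mᴴ P)`
only by the negative semidefinite term `-τ Mᴴ P M`. The feedback `u = -c` then works at every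
state.
-/

open Filter Topology

lemma exists_pos_forall_add_mul_neg {X : Type*} [TopologicalSpace X] {K : Set X}
    (hK : IsCompact K) {f g : X → ℝ} (hf : Continuous f) (hg : Continuous g)
    (hneg : ∀ x ∈ K, f x < 0) : ∃ ε : ℝ, 0 < ε ∧ ∀ x ∈ K, f x + ε * g x < 0 := by
  have hcont : Continuous fun p : ℝ × X => f p.2 + p.1 * g p.2 := by fun_prop
  have hnear : ∀ᶠ ε : ℝ in 𝓝 0, ∀ x ∈ K, f x + ε * g x < 0 :=
    hK.eventually_forall_of_forall_eventually fun x hx =>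
      hcont.continuousAt.eventually_lt_const (by simpa using hneg x hx)
  obtain ⟨ε, hεK, hε⟩ :=
    ((hnear.filter_mono nhdsWithin_le_nhds).and (self_mem_nhdsWithin (s := Set.Ioi 0))).exists
  exact ⟨ε, hε, hεK⟩

section Discretization

lemma exists_pos_forall_norm_one_add_mul_lt_one {K : Set ℂ} (hK : IsCompact K)
    (hre : ∀ μ ∈ K, μ.re < 0) : ∃ τ : ℝ, 0 < τ ∧ ∀ μ ∈ K, ‖1 + (τ : ℂ) * μ‖ < 1 := by
  obtain ⟨τ, hτ, hτK⟩ := exists_pos_forall_add_mul_neg hK (f := fun μ => 2 * μ.re)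
    (g := fun μ => ‖μ‖ ^ 2) (by fun_prop) (by fun_prop) fun μ hμ => by linarith [hre μ hμ]
  refine ⟨τ, hτ, fun μ hμ => ?_⟩
  have hsq : ‖1 + (τ : ℂ) * μ‖ ^ 2 = 1 + τ * (2 * μ.re + τ * ‖μ‖ ^ 2) := by
    simp only [Complex.sq_norm, Complex.normSq_apply, Complex.add_re, Complex.add_im,
      Complex.one_re, Complex.one_im, Complex.re_ofReal_mul, Complex.im_ofReal_mul]
    ring
  refine (sq_lt_one_iff₀ (norm_nonneg _)).1 ?_
  linarith [mul_neg_of_pos_of_neg hτ (hτK μ hμ)]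

variable {𝔸 : Type*} [NormedRing 𝔸] [NormedAlgebra ℂ 𝔸] [CompleteSpace 𝔸]

lemma exists_pos_spectralRadius_one_add_smul_lt_one {a : 𝔸}
    (ha : ∀ μ ∈ spectrum ℂ a, μ.re < 0) :
    ∃ τ : ℝ, 0 < τ ∧ spectralRadius ℂ (1 + (τ : ℂ) • a) < 1 := by
  rcases subsingleton_or_nontrivial 𝔸 with _ | _
  · exact ⟨1, one_pos, by simp [spectrum.SpectralRadius.of_subsingleton]⟩
  obtain ⟨τ, hτ, hlt⟩ :=
    exists_pos_forall_norm_one_add_mul_lt_one (spectrum.isCompact (𝕜 := ℂ) a) ha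
  refine ⟨τ, hτ, spectrum.spectralRadius_lt_of_forall_lt (r := 1) _ fun z hz => ?_⟩
  rw [← map_one (algebraMap ℂ 𝔸), ← spectrum.singleton_add_eq,
    spectrum.smul_eq_smul _ _ (spectrum.nonempty a)] at hz
  obtain ⟨_, rfl, _, ⟨μ, hμ, rfl⟩, rfl⟩ := hz
  exact hlt μ hμ

lemma tendsto_pow_of_spectralRadius_lt_one {a : 𝔸} (ha : spectralRadius ℂ a < 1) :
    Tendsto (fun k : ℕ => a ^ k) atTop (𝓝 0) := by
  obtain ⟨r, har, hr⟩ := ENNReal.lt_iff_exists_nnreal_btwn.1 ha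
  have hle : ∀ᶠ k : ℕ in atTop, ‖a ^ k‖ ≤ (r : ℝ) ^ k := by
    have hgelfand := spectrum.pow_nnnorm_pow_one_div_tendsto_nhds_spectralRadius a
    filter_upwards [hgelfand.eventually_lt_const har, eventually_gt_atTop 0] with k hk hk0
    rw [one_div, ENNReal.rpow_inv_lt_iff (by exact_mod_cast hk0), ENNReal.rpow_natCast] at hk
    exact_mod_cast hk.le
  exact squeeze_zero_norm' hle
    (tendsto_pow_atTop_nhds_zero_of_lt_one r.coe_nonneg (by exact_mod_cast hr))

end Discretization

section Lyapunov

open scoped ComplexOrder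

open scoped MatrixOrder in
lemma posDef_map_ofReal {n : Type*} [Finite n] {P : Matrix n n ℝ} (hP : P.PosDef) :
    (P.map Complex.ofReal).PosDef := by
  classical
  have := Fintype.ofFinite n
  have hunit : IsUnit (P.map Complex.ofReal) := hP.isUnit.map Complex.ofRealHom.mapMatrix
  obtain ⟨R, rfl⟩ := CStarAlgebra.nonneg_iff_eq_star_mul_self.1 hP.posSemidef.nonneg
  refine (PosSemidef.posDef_iff_isUnit ?_).2 hunit
  have hmap : (star R * R).map Complex.ofReal =
      (R.map Complex.ofReal)ᴴ * R.map Complex.ofReal := by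
    ext i j
    simp [mul_apply, star_eq_conjTranspose]
  exact hmap ▸ posSemidef_conjTranspose_mul_self _

lemma sum_star_pow_mul_pow_sub_conj {R : Type*} [Ring R] [StarRing R] (c : R) (k : ℕ) :
    ∑ j ∈ Finset.range k, star (c ^ j) * c ^ j -
        star c * (∑ j ∈ Finset.range k, star (c ^ j) * c ^ j) * c = 1 - star (c ^ k) * c ^ k := by
  have hshift : star c * (∑ j ∈ Finset.range k, star (c ^ j) * c ^ j) * c =
      ∑ j ∈ Finset.range k, star (c ^ (j + 1)) * c ^ (j + 1) := by
    simp only [Finset.mul_sum, Finset.sum_mul, pow_succ, star_mul, mul_assoc]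
  rw [hshift, ← Finset.sum_sub_distrib, Finset.sum_range_sub' fun j => star (c ^ j) * c ^ j]
  simp

variable {n : Type*} [Fintype n] [DecidableEq n]

open scoped Matrix.Norms.L2Operator in
lemma posDef_one_sub_conjTranspose_mul_self {𝕜 : Type*} [RCLike 𝕜] {D : Matrix n n 𝕜}
    (hD : ‖D‖ < 1) : (1 - Dᴴ * D).PosDef := by
  refine .of_dotProduct_mulVec_pos (isHermitian_one.sub (isHermitian_conjTranspose_mul_self D))
    fun x hx => ?_
  have hnorm : ∀ y : n → 𝕜, star y ⬝ᵥ y = ((‖WithLp.toLp 2 y‖ ^ 2 : ℝ) : 𝕜) := fun y => by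
    rw [EuclideanSpace.norm_sq_eq]
    simp [dotProduct, RCLike.conj_mul]
  have hlt : ‖WithLp.toLp 2 (D *ᵥ x)‖ < ‖WithLp.toLp 2 x‖ :=
    (l2_opNorm_mulVec D (WithLp.toLp 2 x)).trans_lt
      (mul_lt_of_lt_one_left (norm_pos_iff.2 (by simpa using hx)) hD)
  rw [sub_mulVec, one_mulVec, dotProduct_sub, ← mulVec_mulVec, dotProduct_mulVec,
    vecMul_conjTranspose, star_star, hnorm, hnorm, ← RCLike.ofReal_sub, RCLike.ofReal_pos, sub_pos]
  gcongr

lemma exists_posDef_stein {𝕜 : Type*} [RCLike 𝕜] {C : Matrix n n 𝕜}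
    (hC : Tendsto (fun k : ℕ => C ^ k) atTop (𝓝 0)) :
    ∃ P : Matrix n n 𝕜, P.PosDef ∧ (P - Cᴴ * P * C).PosDef := by
  open scoped Matrix.Norms.L2Operator in
  have hsmall : ∀ᶠ k in atTop, ‖C ^ k‖ < 1 :=
    hC.norm.eventually_lt_const (by simp)
  obtain ⟨k, hk, hk0⟩ := (hsmall.and (eventually_gt_atTop 0)).exists
  refine ⟨∑ j ∈ Finset.range k, star (C ^ j) * C ^ j, ?_, ?_⟩
  · obtain ⟨l, rfl⟩ := Nat.exists_eq_add_one.2 hk0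
    rw [Finset.sum_range_succ', pow_zero, star_one, one_mul]
    exact .posSemidef_add
      (posSemidef_sum _ fun j _ => posSemidef_conjTranspose_mul_self (C ^ (j + 1))) .one
  · rw [← star_eq_conjTranspose, sum_star_pow_mul_pow_sub_conj]
    exact posDef_one_sub_conjTranspose_mul_self hk

lemma posDef_lyapunov_of_posDef_stein {𝕜 : Type*} [RCLike 𝕜] {M P : Matrix n n 𝕜}
    {τ : ℝ} (hτ : 0 < τ) (hP : P.PosDef)
    (hstein : (P - (1 + τ • M)ᴴ * P * (1 + τ • M)).PosDef) :
    (-(P * M + Mᴴ * P)).PosDef := by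
  have hexpand : τ⁻¹ • (P - (1 + τ • M)ᴴ * P * (1 + τ • M)) + τ • (Mᴴ * P * M) =
      -(P * M + Mᴴ * P) := by
    simp only [conjTranspose_add, conjTranspose_one, conjTranspose_smul, star_trivial, add_mul,
      mul_add, one_mul, mul_one, smul_mul_assoc, mul_smul_comm]
    match_scalars <;> field_simp <;> ring
  rw [← hexpand]
  exact (hstein.smul (inv_pos.2 hτ)).add_posSemidef
    ((hP.posSemidef.conjTranspose_mul_mul_same M).smul hτ.le)

open scoped Matrix.Norms.L2Operator in
lemma exists_pos_tendsto_pow_one_add_smul {M : Matrix n n ℝ}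
    (hM : ∀ μ ∈ spectrum ℂ (M.map Complex.ofReal), μ.re < 0) :
    ∃ τ : ℝ, 0 < τ ∧ Tendsto (fun k : ℕ => (1 + τ • M) ^ k) atTop (𝓝 0) := by
  obtain ⟨τ, hτ, hlt⟩ := exists_pos_spectralRadius_one_add_smul_lt_one hM
  refine ⟨τ, hτ, ?_⟩
  have hpow : ∀ k : ℕ, (1 + (τ : ℂ) • M.map Complex.ofReal) ^ k =
      ((1 + τ • M) ^ k).map Complex.ofReal := fun k => by
    have hbase : 1 + (τ : ℂ) • M.map Complex.ofReal = (1 + τ • M).map Complex.ofReal := by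
      ext i j; simp [one_apply, apply_ite]
    rw [hbase]
    exact (map_pow Complex.ofRealHom.mapMatrix _ k).symm
  have hre := ((continuous_id.matrix_map Complex.continuous_re).tendsto 0).comp
    (tendsto_pow_of_spectralRadius_lt_one hlt)
  have hreal : ∀ X : Matrix n n ℝ, (X.map Complex.ofReal).map Complex.re = X := fun X => by
    ext i j; simp
  simpa only [Function.comp_def, hpow, id, hreal, Matrix.map_zero _ Complex.zero_re] using hre

lemma exists_posDef_lyapunov {M : Matrix n n ℝ}
    (hM : ∀ μ ∈ spectrum ℂ (M.map Complex.ofReal), μ.re < 0) :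
    ∃ P : Matrix n n ℝ, P.PosDef ∧ (-(P * M + Mᴴ * P)).PosDef := by
  obtain ⟨τ, hτ, hpow⟩ := exists_pos_tendsto_pow_one_add_smul hM
  obtain ⟨P, hP, hstein⟩ := exists_posDef_stein hpow
  exact ⟨P, hP, posDef_lyapunov_of_posDef_stein hτ hP hstein⟩

lemma re_neg_of_mem_spectrum_of_posDef_lyapunov {M P : Matrix n n ℂ} (hP : P.PosDef)
    (hM : (-(P * M + Mᴴ * P)).PosDef) {μ : ℂ} (hμ : μ ∈ spectrum ℂ M) : μ.re < 0 := by
  rw [← spectrum_toLin', ← Module.End.hasEigenvalue_iff_mem_spectrum] at hμ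
  obtain ⟨v, hv⟩ := hμ.exists_hasEigenvector
  have hMv : M *ᵥ v = μ • v := hv.apply_eq_smul
  have hform : star v ⬝ᵥ (-(P * M + Mᴴ * P)) *ᵥ v =
      ((-(2 * μ.re) : ℝ) : ℂ) * (star v ⬝ᵥ P *ᵥ v) := by
    have hvM : star v ᵥ* Mᴴ = star μ • star v := by rw [← star_mulVec, hMv, star_smul]
    simp only [neg_mulVec, add_mulVec, ← mulVec_mulVec, hMv, mulVec_smul, dotProduct_neg,
      dotProduct_add, dotProduct_mulVec _ Mᴴ, hvM, dotProduct_smul, smul_dotProduct, smul_eq_mul,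
      ← add_mul, RCLike.star_def, Complex.add_conj, neg_mul, Complex.ofReal_neg]
  have hpos := hM.re_dotProduct_pos hv.2
  rw [hform, RCLike.re_to_complex, Complex.re_ofReal_mul] at hpos
  linarith [(pos_iff_pos_of_mul_pos hpos).2 (hP.re_dotProduct_pos hv.2)]

end Lyapunov

section Farkas

variable {E ι : Type*} [AddCommGroup E] [Module ℝ E] [TopologicalSpace E] [Fintype ι]

lemma exists_nonneg_forall_mul_add_sum_neg {K : Set E} (hK : IsCompact K) (hKc : Convex ℝ K)
    (f : E →L[ℝ] ℝ) (g : ι → E →L[ℝ] ℝ) (hfg : ¬∃ x ∈ K, 0 ≤ f x ∧ ∀ i, g i x = 0) :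
    ∃ (a : ℝ) (b : ι → ℝ), 0 ≤ a ∧ ∀ x ∈ K, a * f x + ∑ i, b i * g i x < 0 := by
  classical
  let Φ : E →L[ℝ] ℝ × (ι → ℝ) := f.prod (.pi g)
  have hdisj : Disjoint (Φ '' K) (Set.Ici (0 : ℝ) ×ˢ ({0} : Set (ι → ℝ))) := by
    rw [Set.disjoint_left]
    rintro _ ⟨x, hx, rfl⟩ ⟨hfx, hgx⟩
    exact hfg ⟨x, hx, hfx, congrFun hgx⟩
  obtain ⟨ℓ, s, t, hs, hst, ht⟩ := geometric_hahn_banach_compact_closed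
    (hKc.linear_image Φ.toLinearMap) (hK.image Φ.continuous)
    ((convex_Ici 0).prod (convex_singleton 0)) (isClosed_Ici.prod isClosed_singleton) hdisj
  have hℓ : ∀ (r : ℝ) (v : ι → ℝ),
      ℓ (r, v) = ℓ (1, 0) * r + ∑ i, ℓ (0, Pi.single i 1) * v i := fun r v => by
    have hrv : (r, v) = r • ((1 : ℝ), (0 : ι → ℝ)) + ∑ i, v i • ((0 : ℝ), Pi.single i (1 : ℝ)) := by
      ext j <;> simp [Prod.fst_sum, Prod.snd_sum, Pi.single_apply]
    rw [hrv]
    simp only [map_add, map_sum, map_smul, smul_eq_mul, mul_comm]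
  have ht0 : t < 0 := by simpa using ht 0 (by simp)
  refine ⟨ℓ (1, 0), fun i => ℓ (0, Pi.single i 1), ?_, fun x hx => ?_⟩
  · by_contra! hneg
    have := ht (t / ℓ (1, 0), 0) (by simpa using div_nonneg_of_nonpos ht0.le hneg.le)
    rw [hℓ] at this
    simp [mul_div_cancel₀ _ hneg.ne] at this
  · have hlt : ℓ (f x, fun i => g i x) < s := hs _ (Set.mem_image_of_mem Φ hx)
    rw [hℓ] at hlt
    exact hlt.trans (hst.trans ht0)

lemma exists_forall_lt_sum_mul {K : Set E} (hK : IsCompact K) (hKc : Convex ℝ K)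
    (f : E →L[ℝ] ℝ) (g : ι → E →L[ℝ] ℝ) (hfg : ¬∃ x ∈ K, 0 ≤ f x ∧ ∀ i, g i x = 0) :
    ∃ c : ι → ℝ, ∀ x ∈ K, f x < ∑ i, c i * g i x := by
  obtain ⟨a, b, ha, hab⟩ := exists_nonneg_forall_mul_add_sum_neg hK hKc f g hfg
  -- The separating functional may have `a = 0`; compactness of `K` leaves room to increase `a`.
  obtain ⟨ε, hε, hεK⟩ := exists_pos_forall_add_mul_neg hK
    (f := fun x => a * f x + ∑ i, b i * g i x) (by fun_prop) f.continuous hab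
  have haε : 0 < a + ε := add_pos_of_nonneg_of_pos ha hε
  refine ⟨fun i => -(a + ε)⁻¹ * b i, fun x hx => ?_⟩
  have hlt : (a + ε) * f x < -∑ i, b i * g i x := by linarith [hεK x hx]
  calc f x < (a + ε)⁻¹ * -∑ i, b i * g i x := (lt_inv_mul_iff₀ haε).2 hlt
    _ = ∑ i, -(a + ε)⁻¹ * b i * g i x := by
      simp only [mul_neg, neg_mul, Finset.mul_sum, Finset.sum_neg_distrib, mul_assoc]

variable {n : Type*} [Fintype n]

/-- The density matrices (positive semidefinite of trace one): a compact base of the cone of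
positive semidefinite matrices, over which the dual variable `Z` of the semidefinite program is
normalised. -/
def densityMatrices (n : Type*) [Fintype n] : Set (Matrix n n ℝ) :=
  {Z | Z.PosSemidef ∧ Z.trace = 1}

lemma convex_densityMatrices : Convex ℝ (densityMatrices n) := by
  rintro X ⟨hX, hXtr⟩ Y ⟨hY, hYtr⟩ a b ha hb hab
  exact ⟨(hX.smul ha).add (hY.smul hb), by simp [hXtr, hYtr, hab]⟩

open scoped MatrixOrder in
lemma isCompact_densityMatrices : IsCompact (densityMatrices n) := by
  classical
  let toMat : EuclideanSpace ℝ (n × n) → Matrix n n ℝ := fun x => of fun i j => x (i, j)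
  have htrace : ∀ x, ((toMat x)ᵀ * toMat x).trace = ‖x‖ ^ 2 := fun x => by
    simp only [trace, diag_apply, mul_apply, transpose_apply, toMat, of_apply, ← sq,
      EuclideanSpace.real_norm_sq_eq, Fintype.sum_prod_type]
    exact Finset.sum_comm
  have himage : densityMatrices n =
      (fun x => (toMat x)ᵀ * toMat x) '' Metric.sphere 0 1 := by
    ext Z
    constructor
    · rintro ⟨hZ, hZtr⟩
      obtain ⟨R, rfl⟩ := CStarAlgebra.nonneg_iff_eq_star_mul_self.1 hZ.nonneg
      have hR : toMat (WithLp.toLp 2 fun p => R p.1 p.2) = R := rfl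
      refine ⟨WithLp.toLp 2 fun p => R p.1 p.2, ?_, ?_⟩
      · rw [mem_sphere_zero_iff_norm, ← pow_eq_one_iff_of_nonneg (norm_nonneg _) two_ne_zero,
          ← htrace, hR]
        exact hZtr
      · rfl
    · rintro ⟨x, hx, rfl⟩
      refine ⟨posSemidef_conjTranspose_mul_self (toMat x), ?_⟩
      rw [htrace, mem_sphere_zero_iff_norm.1 hx, one_pow]
  rw [himage]
  exact (isCompact_sphere 0 1).image (by fun_prop)

lemma posDef_of_forall_densityMatrices {W : Matrix n n ℝ} (hW : W.IsHermitian)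
    (hpos : ∀ Z ∈ densityMatrices n, 0 < (W * Z).trace) : W.PosDef := by
  refine .of_dotProduct_mulVec_pos hW fun x hx => ?_
  have hxx : 0 < x ⬝ᵥ x := by simpa using dotProduct_star_self_pos_iff.2 hx
  have hZ : (x ⬝ᵥ x)⁻¹ • vecMulVec x x ∈ densityMatrices n :=
    ⟨(posSemidef_vecMulVec_self_star x).smul (inv_nonneg.2 hxx.le), by
      rw [trace_smul, trace_vecMulVec, smul_eq_mul, inv_mul_cancel₀ hxx.ne']⟩
  have htr : (W * ((x ⬝ᵥ x)⁻¹ • vecMulVec x x)).trace = (x ⬝ᵥ x)⁻¹ * (x ⬝ᵥ W *ᵥ x) := by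
    rw [mul_smul_comm, trace_smul, mul_vecMulVec, trace_vecMulVec,
      dotProduct_comm (W *ᵥ x), smul_eq_mul]
  exact pos_of_mul_pos_right (htr ▸ hpos _ hZ) (inv_nonneg.2 hxx.le)

lemma exists_posDef_sum_smul_sub {F : Matrix n n ℝ} {G : ι → Matrix n n ℝ}
    (hF : F.IsHermitian) (hG : ∀ i, (G i).IsHermitian)
    (hFG : ¬∃ Z : Matrix n n ℝ, Z.PosSemidef ∧ Z ≠ 0 ∧ 0 ≤ (F * Z).trace ∧
      ∀ i, (G i * Z).trace = 0) :
    ∃ c : ι → ℝ, (∑ i, c i • G i - F).PosDef := by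
  let traceMul (W : Matrix n n ℝ) : Matrix n n ℝ →L[ℝ] ℝ :=
    ⟨traceLinearMap n ℝ ℝ ∘ₗ LinearMap.mulLeft ℝ W, by
      change Continuous fun Z => (W * Z).trace
      fun_prop⟩
  obtain ⟨c, hc⟩ := exists_forall_lt_sum_mul isCompact_densityMatrices convex_densityMatrices
    (traceMul F) (fun i => traceMul (G i)) fun ⟨Z, ⟨hZ, hZtr⟩, hFZ, hGZ⟩ =>
      hFG ⟨Z, hZ, by rintro rfl; simp at hZtr, hFZ, hGZ⟩
  refine ⟨c, posDef_of_forall_densityMatrices ?_ fun Z hZ => ?_⟩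
  · exact .sub (isSelfAdjoint_sum _ fun i _ => (hG i).smul (.all (c i))) hF
  · have hlt : (F * Z).trace < ∑ i, c i * (G i * Z).trace := hc Z hZ
    simpa [sub_mul, Finset.sum_mul, trace_sum] using hlt

end Farkas

section BilinearSystem

variable {n ι : Type*}

/-- The symmetric part `sym(X) = (X + Xᵀ) / 2` of a matrix, as a linear map. -/
noncomputable def symmPart : Matrix n n ℝ →ₗ[ℝ] Matrix n n ℝ :=
  (1 / 2 : ℝ) • (LinearMap.id + (transposeLinearEquiv n n ℝ ℝ).toLinearMap)

lemma symmPart_apply (X : Matrix n n ℝ) : symmPart X = (1 / 2 : ℝ) • (X + Xᵀ) := rfl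

lemma isHermitian_symmPart (X : Matrix n n ℝ) : (symmPart X).IsHermitian := by
  simp [IsHermitian, symmPart_apply, add_comm]

variable [Fintype n] [Fintype ι]

lemma dotProduct_symmPart_mulVec (X : Matrix n n ℝ) (z : n → ℝ) :
    z ⬝ᵥ symmPart X *ᵥ z = z ⬝ᵥ X *ᵥ z := by
  have htranspose : z ⬝ᵥ Xᵀ *ᵥ z = z ⬝ᵥ X *ᵥ z := by
    rw [mulVec_transpose, dotProduct_comm, dotProduct_mulVec]
  rw [symmPart_apply, smul_mulVec, dotProduct_smul, add_mulVec, dotProduct_add, htranspose,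
    smul_eq_mul]
  ring

lemma dotProduct_add_sum_neg_of_posDef_neg_symmPart {Q A : Matrix n n ℝ} {B : ι → Matrix n n ℝ}
    {c : ι → ℝ} (hQ : (-symmPart (Q * (A - ∑ i, c i • B i))).PosDef) {z : n → ℝ} (hz : z ≠ 0) :
    z ⬝ᵥ (Q * A) *ᵥ z + ∑ i, (z ⬝ᵥ (Q * B i) *ᵥ z) * (-c i) < 0 := by
  have hpos := hQ.dotProduct_mulVec_pos hz
  rw [star_trivial, neg_mulVec, dotProduct_neg, dotProduct_symmPart_mulVec, neg_pos, mul_sub,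
    Finset.mul_sum, sub_mulVec, sum_mulVec, dotProduct_sub, dotProduct_sum] at hpos
  simpa [mul_smul_comm, smul_mulVec, mul_comm, sub_eq_add_neg] using hpos

lemma symmPart_mul_of_isHermitian {Q : Matrix n n ℝ} (hQ : Q.IsHermitian) (M : Matrix n n ℝ) :
    symmPart (Q * M) = (1 / 2 : ℝ) • (Q * M + Mᴴ * Q) := by
  rw [symmPart_apply, ← conjTranspose_eq_transpose_of_trivial, conjTranspose_mul, hQ.eq]

lemma isHurwitz_iff_exists_posDef {N : ℕ} {M : Matrix (Fin N) (Fin N) ℝ} :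
    IsHurwitz M ↔ ∃ Q : Matrix (Fin N) (Fin N) ℝ, Q.PosDef ∧ (-symmPart (Q * M)).PosDef := by
  constructor
  · intro hM
    obtain ⟨Q, hQ, hlyap⟩ := exists_posDef_lyapunov hM
    refine ⟨Q, hQ, ?_⟩
    rw [symmPart_mul_of_isHermitian hQ.isHermitian, ← smul_neg]
    exact hlyap.smul one_half_pos
  · rintro ⟨Q, hQ, hlyap⟩ μ hμ
    have hdouble : (2 : ℝ) • -symmPart (Q * M) = -(Q * M + Mᴴ * Q) := by
      rw [symmPart_mul_of_isHermitian hQ.isHermitian]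
      module
    have hcomplex : (-(Q * M + Mᴴ * Q)).map Complex.ofReal =
        -(Q.map Complex.ofReal * M.map Complex.ofReal +
          (M.map Complex.ofReal)ᴴ * Q.map Complex.ofReal) := by
      ext i j
      simp [mul_apply]
    refine re_neg_of_mem_spectrum_of_posDef_lyapunov (posDef_map_ofReal hQ) ?_ hμ
    rw [← hcomplex, ← hdouble]
    exact posDef_map_ofReal (hlyap.smul two_pos)

end BilinearSystem

/-- main equivalence: under the assumption that every CLF-matrix Q
makes the SDP feasibility problem infeasible, a quadratic CLF exists if and only
if a constant stabilizing controller exists. -/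
theorem stmt_18 {N m : ℕ} (A : Matrix (Fin N) (Fin N) ℝ)
    (B : Fin m → Matrix (Fin N) (Fin N) ℝ)
    (hassump : ∀ Q : Matrix (Fin N) (Fin N) ℝ, Q.PosDef →
      (∀ z : Fin N → ℝ, z ≠ 0 → ∃ u : Fin m → ℝ,
        z ⬝ᵥ ((Q * A) *ᵥ z) + ∑ i, (z ⬝ᵥ ((Q * B i) *ᵥ z)) * u i < 0) →
      ¬∃ Z : Matrix (Fin N) (Fin N) ℝ, Z.PosSemidef ∧ Z ≠ 0 ∧
        0 ≤ Matrix.trace (((1 / 2 : ℝ) • (Q * A + (Q * A)ᵀ)) * Z) ∧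
        ∀ i, Matrix.trace (((1 / 2 : ℝ) • (Q * B i + (Q * B i)ᵀ)) * Z) = 0) :
    (∃ Q : Matrix (Fin N) (Fin N) ℝ, Q.PosDef ∧
        ∀ z : Fin N → ℝ, z ≠ 0 → ∃ u : Fin m → ℝ,
          z ⬝ᵥ ((Q * A) *ᵥ z) + ∑ i, (z ⬝ᵥ ((Q * B i) *ᵥ z)) * u i < 0) ↔
      (∃ c : Fin m → ℝ, IsHurwitz (A - ∑ i, c i • B i)) := by
  constructor
  · rintro ⟨Q, hQ, hclf⟩
    obtain ⟨c, hc⟩ := exists_posDef_sum_smul_sub (isHermitian_symmPart (Q * A))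
      (fun i => isHermitian_symmPart (Q * B i)) (hassump Q hQ hclf)
    refine ⟨c, isHurwitz_iff_exists_posDef.2 ⟨Q, hQ, ?_⟩⟩
    simpa only [mul_sub, Finset.mul_sum, mul_smul_comm, map_sub, map_sum, map_smul, neg_sub]
      using hc
  · rintro ⟨c, hc⟩
    obtain ⟨Q, hQ, hlyap⟩ := isHurwitz_iff_exists_posDef.1 hc
    exact ⟨Q, hQ, fun z hz =>
      ⟨fun i => -c i, dotProduct_add_sum_neg_of_posDef_neg_symmPart hlyap hz⟩⟩
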